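/- Let M be a 2×2 integer matrix with nonnegative entries and nonzero determinant which is not an orphan. Then there exists a unique 2×2 integer matrix N with nonnegative entries such that M = L1 * N or M = R1 * N; moreover this N has nonzero determinant equal to det M. (Every non-orphan positive linear fractional transformation has a unique parent, and the determinant of a child equals the determinant of its parent.) -/

import Mathlib

/-!
Multiplying by `L1` on the left adds the top row of a matrix to the bottom one, and
multiplying by `R1` adds the bottom row to the top one. So a nonnegative `N` with `M = L1 * N`
exists iff the top row of `M` is entrywise at most the bottom row, and then `N` is determined by
subtraction; symmetrically for `R1`. A non-orphan has comparable rows, which gives existence. If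
both cases occurred, the two rows would coincide and the determinant would vanish, which gives
uniqueness. The determinant is preserved because `L1` and `R1` have determinant one.
-/

def L1 : Matrix (Fin 2) (Fin 2) ℤ := !![1, 0; 1, 1]

def R1 : Matrix (Fin 2) (Fin 2) ℤ := !![1, 1; 0, 1]

/-- A nonnegative integer matrix with nonzero determinant is an orphan if
its rows are incomparable. -/
def IsOrphan (N : Matrix (Fin 2) (Fin 2) ℤ) : Prop :=
  (∀ i j, 0 ≤ N i j) ∧ N.det ≠ 0 ∧
    ((N 0 0 < N 1 0 ∧ N 1 1 < N 0 1) ∨ (N 1 0 < N 0 0 ∧ N 0 1 < N 1 1))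

theorem eq_L1_mul_iff (M N : Matrix (Fin 2) (Fin 2) ℤ) :
    M = L1 * N ↔ M 0 0 = N 0 0 ∧ M 0 1 = N 0 1 ∧
      M 1 0 = N 0 0 + N 1 0 ∧ M 1 1 = N 0 1 + N 1 1 := by
  rw [← Matrix.ext_iff]
  simp [Fin.forall_fin_two, L1, Matrix.mul_apply, Fin.sum_univ_two, and_assoc]

theorem eq_R1_mul_iff (M N : Matrix (Fin 2) (Fin 2) ℤ) :
    M = R1 * N ↔ M 0 0 = N 0 0 + N 1 0 ∧ M 0 1 = N 0 1 + N 1 1 ∧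
      M 1 0 = N 1 0 ∧ M 1 1 = N 1 1 := by
  rw [← Matrix.ext_iff]
  simp [Fin.forall_fin_two, R1, Matrix.mul_apply, Fin.sum_univ_two, and_assoc]

/-- The rows of a non-orphan are comparable entrywise. -/
theorem rows_comparable (M : Matrix (Fin 2) (Fin 2) ℤ)
    (hpos : ∀ i j, 0 ≤ M i j) (hdet : M.det ≠ 0) (hM : ¬IsOrphan M) :
    (M 0 0 ≤ M 1 0 ∧ M 0 1 ≤ M 1 1) ∨ (M 1 0 ≤ M 0 0 ∧ M 1 1 ≤ M 0 1) := by
  have h : ¬((M 0 0 < M 1 0 ∧ M 1 1 < M 0 1) ∨ (M 1 0 < M 0 0 ∧ M 0 1 < M 1 1)) :=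
    fun h => hM ⟨hpos, hdet, h⟩
  omega

/-- A nonsingular matrix cannot have both an `L1`-parent and an `R1`-parent with nonnegative
entries, since its two rows would then be equal. -/
theorem not_both_parents (M N N' : Matrix (Fin 2) (Fin 2) ℤ) (hdet : M.det ≠ 0)
    (hN : ∀ i j, 0 ≤ N i j) (hN' : ∀ i j, 0 ≤ N' i j)
    (hL : M = L1 * N) (hR : M = R1 * N') : False := by
  rw [eq_L1_mul_iff] at hL
  rw [eq_R1_mul_iff] at hR
  have h1 := hN 1 0
  have h2 := hN 1 1
  have h3 := hN' 0 0
  have h4 := hN' 0 1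
  have e1 : M 0 0 = M 1 0 := by omega
  have e2 : M 0 1 = M 1 1 := by omega
  apply hdet
  rw [Matrix.det_fin_two, e1, e2]
  ring

theorem det_L1 : L1.det = 1 := by simp [L1, Matrix.det_fin_two]

theorem det_R1 : R1.det = 1 := by simp [R1, Matrix.det_fin_two]

theorem L1_mul_injective (N N' : Matrix (Fin 2) (Fin 2) ℤ) (h : L1 * N = L1 * N') : N = N' := by
  have hu : IsUnit L1 := (Matrix.isUnit_iff_isUnit_det _).2 (by simp [det_L1])
  exact hu.mul_left_cancel h

theorem R1_mul_injective (N N' : Matrix (Fin 2) (Fin 2) ℤ) (h : R1 * N = R1 * N') : N = N' := by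
  have hu : IsUnit R1 := (Matrix.isUnit_iff_isUnit_det _).2 (by simp [det_R1])
  exact hu.mul_left_cancel h

theorem unique_parent (M : Matrix (Fin 2) (Fin 2) ℤ)
    (hpos : ∀ i j, 0 ≤ M i j) (hdet : M.det ≠ 0) (hM : ¬IsOrphan M) :
    (∃! N : Matrix (Fin 2) (Fin 2) ℤ,
        (∀ i j, 0 ≤ N i j) ∧ (M = L1 * N ∨ M = R1 * N)) ∧
      ∀ N : Matrix (Fin 2) (Fin 2) ℤ,
        (∀ i j, 0 ≤ N i j) → (M = L1 * N ∨ M = R1 * N) →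
          N.det ≠ 0 ∧ N.det = M.det := by
  refine ⟨existsUnique_of_exists_of_unique ?_ ?_, ?_⟩
  · have h00 := hpos 0 0
    have h01 := hpos 0 1
    have h10 := hpos 1 0
    have h11 := hpos 1 1
    rcases rows_comparable M hpos hdet hM with ⟨h1, h2⟩ | ⟨h1, h2⟩
    · refine ⟨!![M 0 0, M 0 1; M 1 0 - M 0 0, M 1 1 - M 0 1], ?_, Or.inl ?_⟩
      · simp [Fin.forall_fin_two, *]
      · rw [eq_L1_mul_iff]
        simp
    · refine ⟨!![M 0 0 - M 1 0, M 0 1 - M 1 1; M 1 0, M 1 1], ?_, Or.inr ?_⟩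
      · simp [Fin.forall_fin_two, *]
      · rw [eq_R1_mul_iff]
        simp
  · rintro N N' ⟨hN, hL | hR⟩ ⟨hN', hL' | hR'⟩
    · exact L1_mul_injective N N' (hL.symm.trans hL')
    · exact (not_both_parents M N N' hdet hN hN' hL hR').elim
    · exact (not_both_parents M N' N hdet hN' hN hL' hR).elim
    · exact R1_mul_injective N N' (hR.symm.trans hR')
  · intro N _ h
    have hd : N.det = M.det := by
      rcases h with h | h
      · rw [h, Matrix.det_mul, det_L1, one_mul]
      · rw [h, Matrix.det_mul, det_R1, one_mul]
    exact ⟨hd ▸ hdet, hd⟩
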